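/- arXiv:1803.10451 — 3 statements merged into one kernel-verified Lean document; each statement's English description precedes it below -/
import Mathlib

section
/- Let Γ^i_μ : ℝ^m × ℝ^n → ℝ (for 1 ≤ μ ≤ m, 1 ≤ i ≤ n) be continuously differentiable functions, and let f : ℝ^m → ℝ^n be a twice continuously differentiable map satisfying ∂f^i/∂x^μ(x) = Γ^i_μ(x, f(x)) for all x ∈ ℝ^m and all i, μ. Then for all x ∈ ℝ^m and all indices μ, ν, j: R^j_{μν}(x, f(x)) = 0, where R^j_{μν} := ∂Γ^j_ν/∂x^μ − ∂Γ^j_μ/∂x^ν + Σᵢ (Γ^i_μ ∂Γ^j_ν/∂y^i − Γ^i_ν ∂Γ^j_μ/∂y^i). -/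
/-!
Along an integral section `f` the derivative of `f` at `y` is `Γ (y, f y)`. Differentiating once
more by the chain rule shows that the second derivative of `f` at `x` sends `(u, v)` to the
derivative of `Γ` at `(x, f x)` along the horizontal vector `(u, Γ (x, f x) u)`, evaluated at `v`.
Curvature is the antisymmetrization of this expression, so it vanishes because second derivatives
are symmetric.
-/

open scoped Topology

theorem map_prodMk_pi_eq_add_sum {R M N κ L : Type*} [Semiring R] [AddCommMonoid M] [Module R M]
    [AddCommMonoid N] [Module R N] [Fintype κ] [DecidableEq κ] [FunLike L (M × (κ → R)) N]
    [LinearMapClass L R (M × (κ → R)) N] (φ : L) (u : M) (v : κ → R) :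
    φ (u, v) = φ (u, 0) + ∑ i, v i • φ (0, Pi.single i 1) := by
  have split : (u, v) = (u, 0) + ∑ i, v i • ((0 : M), (Pi.single i 1 : κ → R)) := by
    ext
    · simp [Prod.fst_sum]
    · simp [Prod.snd_sum, Pi.single_apply]
  rw [split, map_add, map_sum]
  simp only [map_smul]

section CoordinateFree

variable (𝕜 E F : Type*) [NontriviallyNormedField 𝕜]
  [NormedAddCommGroup E] [NormedSpace 𝕜 E] [NormedAddCommGroup F] [NormedSpace 𝕜 F]

/-- A connection (jet field) on the trivial bundle `E × F → E`: the linear map at `(x, y)` has as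
graph the horizontal subspace of `E × F` at `(x, y)`. No regularity is built in. -/
abbrev JetField := E × F → E →L[𝕜] F

end CoordinateFree

namespace JetField

section Curvature

variable {𝕜 E F : Type*} [NontriviallyNormedField 𝕜]
  [NormedAddCommGroup E] [NormedSpace 𝕜 E] [NormedAddCommGroup F] [NormedSpace 𝕜 F]

/-- The curvature of a jet field, as the antisymmetrized derivative of `Γ` along horizontal lifts.
It has this meaning only at points where `Γ` is differentiable. -/
noncomputable def curvature (Γ : JetField 𝕜 E F) (p : E × F) (u v : E) : F :=
  fderiv 𝕜 Γ p (u, Γ p u) v - fderiv 𝕜 Γ p (v, Γ p v) u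

/-- `y ↦ (y, f y)` is an integral section of the jet field in a neighbourhood of `x`. -/
def IsIntegralAt (Γ : JetField 𝕜 E F) (f : E → F) (x : E) : Prop :=
  ∀ᶠ y in 𝓝 x, HasFDerivAt f (Γ (y, f y)) y

variable {Γ : JetField 𝕜 E F} {f : E → F} {x : E}

theorem IsIntegralAt.hasFDerivAt_comp_graph (hf : Γ.IsIntegralAt f x)
    (hΓ : DifferentiableAt 𝕜 Γ (x, f x)) :
    HasFDerivAt (fun y ↦ Γ (y, f y))
      ((fderiv 𝕜 Γ (x, f x)).comp ((ContinuousLinearMap.id 𝕜 E).prod (Γ (x, f x)))) x :=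
  HasFDerivAt.comp x hΓ.hasFDerivAt ((hasFDerivAt_id x).prodMk hf.self_of_nhds)

theorem IsIntegralAt.curvature_eq_zero [IsRCLikeNormedField 𝕜] (hf : Γ.IsIntegralAt f x)
    (hΓ : DifferentiableAt 𝕜 Γ (x, f x)) (u v : E) : Γ.curvature (x, f x) u v = 0 :=
  sub_eq_zero.2 <|
    second_derivative_symmetric_of_eventually hf (hf.hasFDerivAt_comp_graph hΓ) u v

end Curvature

section Coordinates

variable {𝕜 ι κ : Type*} [NontriviallyNormedField 𝕜] [Fintype ι] [Fintype κ]

/-- The jet field on the trivial bundle `𝕜^ι × 𝕜^κ → 𝕜^ι` with coefficient functions `Γ μ i`,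
where `μ` is the index in the base and `i` the one in the fibre. -/
noncomputable def ofCoeff (Γ : ι → κ → (ι → 𝕜) × (κ → 𝕜) → 𝕜) : JetField 𝕜 (ι → 𝕜) (κ → 𝕜) :=
  fun p ↦ ∑ μ, (ContinuousLinearMap.proj μ).smulRight fun i ↦ Γ μ i p

variable {Γ : ι → κ → (ι → 𝕜) × (κ → 𝕜) → 𝕜} {p : (ι → 𝕜) × (κ → 𝕜)}

theorem ofCoeff_apply_single [DecidableEq ι] (μ : ι) :
    ofCoeff Γ p (Pi.single μ 1) = fun i ↦ Γ μ i p := by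
  ext i
  simp [ofCoeff, Pi.single_apply, ite_apply]

theorem differentiableAt_ofCoeff (hΓ : ∀ μ i, DifferentiableAt 𝕜 (Γ μ i) p) :
    DifferentiableAt 𝕜 (ofCoeff Γ) p :=
  DifferentiableAt.fun_sum fun μ _ ↦
    (ContinuousLinearMap.smulRightL 𝕜 (ι → 𝕜) (κ → 𝕜) (.proj μ)).differentiableAt.comp p
      (differentiableAt_pi.2 (hΓ μ))

theorem fderiv_ofCoeff_apply_single [DecidableEq ι] (hΓ : ∀ μ i, DifferentiableAt 𝕜 (Γ μ i) p)
    (w : (ι → 𝕜) × (κ → 𝕜)) (μ : ι) (i : κ) :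
    fderiv 𝕜 (ofCoeff Γ) p w (Pi.single μ 1) i = fderiv 𝕜 (Γ μ i) p w := by
  have h := hasFDerivAt_pi'.1
    ((differentiableAt_ofCoeff hΓ).hasFDerivAt.clm_apply (hasFDerivAt_const (Pi.single μ 1) p)) i
  simp only [ofCoeff_apply_single] at h
  rw [h.fderiv]
  simp

theorem curvature_ofCoeff_apply_single [DecidableEq ι] [DecidableEq κ]
    (hΓ : ∀ μ i, DifferentiableAt 𝕜 (Γ μ i) p) (μ ν : ι) (j : κ) :
    (ofCoeff Γ).curvature p (Pi.single μ 1) (Pi.single ν 1) j =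
      fderiv 𝕜 (Γ ν j) p (Pi.single μ 1, 0) - fderiv 𝕜 (Γ μ j) p (Pi.single ν 1, 0)
        + ∑ i, (Γ μ i p * fderiv 𝕜 (Γ ν j) p (0, Pi.single i 1)
          - Γ ν i p * fderiv 𝕜 (Γ μ j) p (0, Pi.single i 1)) := by
  simp only [curvature, Pi.sub_apply, fderiv_ofCoeff_apply_single hΓ, ofCoeff_apply_single]
  rw [map_prodMk_pi_eq_add_sum (fderiv 𝕜 (Γ ν j) p), map_prodMk_pi_eq_add_sum (fderiv 𝕜 (Γ μ j) p),
    Finset.sum_sub_distrib]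
  simp only [smul_eq_mul]
  ring

theorem fderiv_eq_ofCoeff [DecidableEq ι] {f : (ι → 𝕜) → (κ → 𝕜)} {x : ι → 𝕜}
    (hsol : ∀ μ i, fderiv 𝕜 f x (Pi.single μ 1) i = Γ μ i (x, f x)) :
    fderiv 𝕜 f x = ofCoeff Γ (x, f x) := by
  refine ContinuousLinearMap.coe_injective (LinearMap.pi_ext' fun μ ↦ LinearMap.ext_ring ?_)
  ext i
  simp [hsol, ofCoeff_apply_single]

end Coordinates

end JetField

open JetField in
theorem stmt_6_general {𝕜 ι κ : Type*} [NontriviallyNormedField 𝕜] [IsRCLikeNormedField 𝕜]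
    [Finite ι] [DecidableEq ι] [Fintype κ] [DecidableEq κ]
    (Γ : ι → κ → (ι → 𝕜) × (κ → 𝕜) → 𝕜) (f : (ι → 𝕜) → (κ → 𝕜)) (x : ι → 𝕜)
    (hΓ : ∀ μ i, DifferentiableAt 𝕜 (Γ μ i) (x, f x))
    (hf : ∀ᶠ y in 𝓝 x, DifferentiableAt 𝕜 f y)
    (hsol : ∀ᶠ y in 𝓝 x, ∀ μ i, fderiv 𝕜 f y (Pi.single μ 1) i = Γ μ i (y, f y))
    (μ ν : ι) (j : κ) :
    fderiv 𝕜 (Γ ν j) (x, f x) (Pi.single μ 1, 0) - fderiv 𝕜 (Γ μ j) (x, f x) (Pi.single ν 1, 0)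
      + ∑ i, (Γ μ i (x, f x) * fderiv 𝕜 (Γ ν j) (x, f x) (0, Pi.single i 1)
        - Γ ν i (x, f x) * fderiv 𝕜 (Γ μ j) (x, f x) (0, Pi.single i 1)) = 0 := by
  cases nonempty_fintype ι
  have h_integral : (ofCoeff Γ).IsIntegralAt f x := by
    filter_upwards [hf, hsol] with y hfy hsoly
    exact fderiv_eq_ofCoeff hsoly ▸ hfy.hasFDerivAt
  have h_flat := h_integral.curvature_eq_zero (differentiableAt_ofCoeff hΓ)
  rw [← curvature_ofCoeff_apply_single hΓ, h_flat, Pi.zero_apply]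

/-- Necessity direction of the integrability Proposition: if `f` solves the
first-order PDE system `∂f^i/∂x^μ = Γ^i_μ(x, f(x))`, then the curvature
components `R^j_{μν}` vanish along the graph of `f`. -/
theorem stmt_6 {m n : ℕ}
    (Γ : Fin m → Fin n → ((Fin m → ℝ) × (Fin n → ℝ)) → ℝ)
    (hΓ : ∀ μ i, ContDiff ℝ 1 (Γ μ i))
    (f : (Fin m → ℝ) → (Fin n → ℝ)) (hf : ContDiff ℝ 2 f)
    (hsol : ∀ (x : Fin m → ℝ) (μ : Fin m) (i : Fin n),
      fderiv ℝ f x (Pi.single μ 1) i = Γ μ i (x, f x)) :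
    ∀ (x : Fin m → ℝ) (μ ν : Fin m) (j : Fin n),
      fderiv ℝ (Γ ν j) (x, f x) (Pi.single μ 1, 0)
        - fderiv ℝ (Γ μ j) (x, f x) (Pi.single ν 1, 0)
        + ∑ i : Fin n,
            (Γ μ i (x, f x) * fderiv ℝ (Γ ν j) (x, f x) (0, Pi.single i 1)
              - Γ ν i (x, f x) * fderiv ℝ (Γ μ j) (x, f x) (0, Pi.single i 1))
      = 0 := by
  intro x
  exact stmt_6_general Γ f x (fun μ i ↦ (hΓ μ i).differentiable one_ne_zero _)
    (.of_forall (hf.differentiable two_ne_zero)) (.of_forall hsol)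
end

section
/- Let Γ : ℝ^m × ℝ^n → L(ℝ^m, ℝ^n) assign to each point (x, y) a linear map Γ(x,y) : ℝ^m → ℝ^n, such that for each fixed x the map y ↦ Γ(x, y) is differentiable at y = 0. Suppose that for every t > 0 and every (x, y), the image of the subspace graph(Γ(x,y)) = {(a, Γ(x,y)(a)) : a ∈ ℝ^m} ⊆ ℝ^m × ℝ^n under the linear map (a, b) ↦ (a, t • b) equals graph(Γ(x, t • y)). Then for every x the map y ↦ Γ(x, y) is linear in y (it equals its derivative at y = 0). -/
/-!
Invariance of the horizontal graphs under scaling the fiber by `c` says exactly that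
`Γ (c • y) = c • Γ y`. When `1 < ‖c‖`, iterating this equation makes `Γ v` equal to every difference
quotient of `Γ` at `0` along the vectors `(c ^ n)⁻¹ • v`, hence to their limit, the derivative of
`Γ` at `0` in the direction `v`.
-/

open Filter Topology

section LinearGraph

variable {R M N P : Type*} [Semiring R] [AddCommMonoid M] [AddCommMonoid N] [AddCommMonoid P]
  [Module R M] [Module R N] [Module R P]

theorem linearMap_graph_injective :
    Function.Injective (LinearMap.graph : (M →ₗ[R] N) → Submodule R (M × N)) := by
  intro f g hfg
  ext a
  have hmem : (a, f a) ∈ g.graph := hfg ▸ (f.mem_graph_iff (a, f a)).mpr rfl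
  exact (g.mem_graph_iff (a, f a)).mp hmem

theorem map_id_prodMap_graph (f : M →ₗ[R] N) (g : N →ₗ[R] P) :
    f.graph.map (LinearMap.id.prodMap g) = (g ∘ₗ f).graph := by
  rw [LinearMap.graph_eq_range_prod, LinearMap.graph_eq_range_prod, ← LinearMap.range_comp]
  rfl

theorem map_id_prodMap_graph_eq_graph_iff {f : M →ₗ[R] N} {g : N →ₗ[R] P} {h : M →ₗ[R] P} :
    f.graph.map (LinearMap.id.prodMap g) = h.graph ↔ g ∘ₗ f = h := by
  rw [map_id_prodMap_graph, linearMap_graph_injective.eq_iff]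

end LinearGraph

theorem map_zero_of_map_smul {K E F : Type*} [DivisionRing K] [Zero E] [SMulZeroClass K E]
    [AddCommGroup F] [Module K F] {f : E → F} {c : K} (hc : c ≠ 1)
    (hsmul : ∀ y, f (c • y) = c • f y) : f 0 = 0 := by
  have hfix : c • f 0 = f 0 := by rw [← hsmul, smul_zero]
  have hsub : (c - 1) • f 0 = 0 := by rw [sub_smul, one_smul, hfix, sub_self]
  exact (smul_eq_zero_iff_right (sub_ne_zero.mpr hc)).mp hsub

theorem map_pow_smul_of_map_smul {M α β : Type*} [Monoid M] [MulAction M α] [MulAction M β]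
    {f : α → β} {c : M} (hsmul : ∀ y, f (c • y) = c • f y) (n : ℕ) (y : α) :
    f (c ^ n • y) = c ^ n • f y := by
  have hsemiconj : Function.Semiconj f (c • ·) (c • ·) := hsmul
  simpa only [smul_iterate] using hsemiconj.iterate_right n y

theorem eq_of_hasFDerivAt_zero_of_map_smul {𝕜 E F : Type*} [NontriviallyNormedField 𝕜]
    [AddCommGroup E] [Module 𝕜 E] [TopologicalSpace E] [ContinuousAdd E] [ContinuousSMul 𝕜 E]
    [AddCommGroup F] [Module 𝕜 F] [TopologicalSpace F] [ContinuousAdd F] [ContinuousSMul 𝕜 F]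
    [T2Space F] {f : E → F} {f' : E →L[𝕜] F} {c : 𝕜} (hc : 1 < ‖c‖) (hf : HasFDerivAt f f' 0)
    (hsmul : ∀ y, f (c • y) = c • f y) : f = f' := by
  funext v
  have hc_zero : c ≠ 0 := norm_pos_iff.mp (one_pos.trans hc)
  have hc_one : c ≠ 1 := by rintro rfl; exact hc.ne' norm_one
  have hpow : Tendsto (fun n : ℕ => ‖c ^ n‖) atTop atTop := by
    simpa only [norm_pow] using tendsto_pow_atTop_atTop_of_one_lt hc
  have hquot (n : ℕ) : c ^ n • (f (0 + (c ^ n)⁻¹ • v) - f 0) = f v := by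
    rw [zero_add, map_zero_of_map_smul hc_one hsmul, sub_zero, ← map_pow_smul_of_map_smul hsmul,
      smul_inv_smul₀ (pow_ne_zero n hc_zero)]
  have hlim : Tendsto (fun _ : ℕ => f v) atTop (𝓝 (f' v)) := by
    simpa only [hquot] using hf.lim v hpow
  exact tendsto_nhds_unique tendsto_const_nhds hlim

theorem stmt_9_general {𝕜 E F V : Type*} [NontriviallyNormedField 𝕜]
    [AddCommGroup E] [Module 𝕜 E] [TopologicalSpace E] [ContinuousAdd E] [ContinuousSMul 𝕜 E]
    [AddCommGroup F] [Module 𝕜 F] [TopologicalSpace F] [IsTopologicalAddGroup F]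
    [ContinuousSMul 𝕜 F] [T2Space F]
    [AddCommGroup V] [Module 𝕜 V] [TopologicalSpace V] [ContinuousSMul 𝕜 V]
    {Γ : E → V →L[𝕜] F} {c : 𝕜} (hc : 1 < ‖c‖) (hdiff : DifferentiableAt 𝕜 Γ 0)
    (hflow : ∀ y, Submodule.map (LinearMap.id.prodMap (c • LinearMap.id))
      (LinearMap.graph (Γ y).toLinearMap) = LinearMap.graph (Γ (c • y)).toLinearMap) (y : E) :
    Γ y = fderiv 𝕜 Γ 0 y := by
  have hsmul (y : E) : Γ (c • y) = c • Γ y :=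
    ContinuousLinearMap.coe_injective (map_id_prodMap_graph_eq_graph_iff.mp (hflow y)).symm
  exact congrFun (eq_of_hasFDerivAt_zero_of_map_smul hc hdiff.hasFDerivAt hsmul) y

/-- Coordinate form of the implication (2 ⇒ 3) in Theorem 4.4: if the fiber-scaling
flow `(a, b) ↦ (a, t • b)` maps the horizontal subspace `graph Γ(x,y)` onto
`graph Γ(x, t • y)` for all `t > 0`, then `Γ(x, ·)` is linear in the fiber
variable, equal to its derivative at `0`. -/
theorem stmt_9 {m n : ℕ}
    (Γ : (Fin m → ℝ) → (Fin n → ℝ) → ((Fin m → ℝ) →L[ℝ] (Fin n → ℝ)))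
    (hdiff : ∀ x, DifferentiableAt ℝ (Γ x) 0)
    (hflow : ∀ t : ℝ, 0 < t → ∀ (x : Fin m → ℝ) (y : Fin n → ℝ),
      Submodule.map
        ((LinearMap.id : (Fin m → ℝ) →ₗ[ℝ] (Fin m → ℝ)).prodMap
          (t • (LinearMap.id : (Fin n → ℝ) →ₗ[ℝ] (Fin n → ℝ))))
        (LinearMap.graph (Γ x y).toLinearMap)
      = LinearMap.graph (Γ x (t • y)).toLinearMap) :
    ∀ (x : Fin m → ℝ) (y : Fin n → ℝ), Γ x y = fderiv ℝ (Γ x) 0 y := by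
  intro x
  exact stmt_9_general (c := (2 : ℝ)) (by norm_num) (hdiff x) (hflow 2 two_pos x)
end

section
/- Let σ : ℝ → ℝ^m be a continuously differentiable curve, let Γ : ℝ^m → L(ℝ^m, L(ℝ^n, ℝ^n)) be a continuous map (the Christoffel symbols in coordinates), and let u₀ ∈ ℝ^n. Then there exists a unique differentiable map V : ℝ → ℝ^n such that V(0) = u₀ and V′(t) = −Γ(σ(t))(σ′(t))(V(t)) for all t ∈ ℝ. -/
/-!
Parallel transport is a linear ODE `V' = A(t) V` with continuous coefficients, and the right-hand
side of such an equation is globally Lipschitz in `V`. Existence on all of `ℝ` then needs no gluing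
of local solutions: if `k` bounds both the Lipschitz constant and the growth of the right-hand side,
and `φ(t) = cosh (2 ∫_{t₀}^t k)`, then `|∫_{t₀}^t k φ| = |sinh (2 ∫_{t₀}^t k)| / 2 ≤ φ(t) / 2`.
Hence the Picard operator halves distances in the norm `sup_t ‖α(t)‖ / φ(t)`, and the
contraction principle applies once, on the whole line.
-/

open Function Set
open scoped BoundedContinuousFunction NNReal

variable {E F : Type*} [NormedAddCommGroup E] [NormedSpace ℝ E]
  [NormedAddCommGroup F] [NormedSpace ℝ F]

-- Conjugating by multiplication by `φ` turns `P` into a contraction of the bounded functions.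
theorem exists_continuous_isFixedPt_of_weighted_contraction {X : Type*} [TopologicalSpace X]
    [CompleteSpace E] {φ : X → ℝ} (hφ : Continuous φ) (hφ₀ : ∀ x, 0 < φ x)
    {P : (X → E) → X → E} {c : ℝ≥0} (hc : c < 1)
    (hcont : ∀ α, Continuous α → Continuous (P α))
    (hbdd : ∀ α C, Continuous α → 0 ≤ C → (∀ x, ‖α x‖ ≤ C * φ x) →
      ∃ D, ∀ x, ‖P α x‖ ≤ D * φ x)
    (hlip : ∀ α β C, Continuous α → Continuous β → 0 ≤ C → (∀ x, ‖α x - β x‖ ≤ C * φ x) →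
      ∀ x, ‖P α x - P β x‖ ≤ c * C * φ x) :
    ∃ α, Continuous α ∧ IsFixedPt P α := by
  have hφ_inv_smul {x : X} {C : ℝ} {e : E} (h : ‖e‖ ≤ C * φ x) : ‖(φ x)⁻¹ • e‖ ≤ C := by
    rwa [norm_smul, norm_inv, Real.norm_of_nonneg (hφ₀ x).le, inv_mul_le_iff₀ (hφ₀ x), mul_comm]
  have hφ_smul (w : X →ᵇ E) (x : X) : ‖φ x • w x‖ ≤ ‖w‖ * φ x := by
    rw [norm_smul, Real.norm_of_nonneg (hφ₀ x).le, mul_comm]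
    exact mul_le_mul_of_nonneg_right (w.norm_coe_le_norm x) (hφ₀ x).le
  have hφw (w : X →ᵇ E) : Continuous fun x ↦ φ x • w x := hφ.smul w.continuous
  choose D hD using fun w : X →ᵇ E ↦ hbdd _ ‖w‖ (hφw w) (norm_nonneg w) (hφ_smul w)
  let T (w : X →ᵇ E) : X →ᵇ E := .ofNormedAddCommGroup
    (fun x ↦ (φ x)⁻¹ • P (fun y ↦ φ y • w y) x)
    ((hφ.inv₀ fun x ↦ (hφ₀ x).ne').smul (hcont _ (hφw w))) (D w) fun x ↦ hφ_inv_smul (hD w x)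
  have hT_apply (w : X →ᵇ E) (x : X) : T w x = (φ x)⁻¹ • P (fun y ↦ φ y • w y) x := rfl
  have hT : ContractingWith c T := by
    refine ⟨hc, .of_dist_le_mul fun w z ↦
      (BoundedContinuousFunction.dist_le (by positivity)).2 fun x ↦ ?_⟩
    have hwz (y : X) : ‖φ y • w y - φ y • z y‖ ≤ ‖w - z‖ * φ y := by
      rw [← smul_sub]
      exact hφ_smul (w - z) y
    rw [dist_eq_norm, dist_eq_norm, hT_apply, hT_apply, ← smul_sub]
    exact hφ_inv_smul (hlip _ _ _ (hφw w) (hφw z) (norm_nonneg _) hwz x)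
  refine ⟨fun x ↦ φ x • hT.fixedPoint T x, hφw _, funext fun x ↦ ?_⟩
  conv_rhs => rw [← hT.fixedPoint_isFixedPt.eq, hT_apply, smul_inv_smul₀ (hφ₀ x).ne']

section PicardWeight

/-- The weight of the sup norm in which the Picard operator of a vector field with Lipschitz
constant `k t` at time `t` is a contraction. The hyperbolic cosine, unlike the exponential of
`2 |∫ s in t₀..t, k s|`, makes past and future times alike without an absolute value. -/
noncomputable def picardWeight (k : ℝ → ℝ) (t₀ t : ℝ) : ℝ :=
  Real.cosh (2 * ∫ s in t₀..t, k s)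

variable {k : ℝ → ℝ} {t₀ : ℝ}

lemma one_le_picardWeight (k : ℝ → ℝ) (t₀ t : ℝ) : 1 ≤ picardWeight k t₀ t :=
  Real.one_le_cosh _

lemma picardWeight_pos (k : ℝ → ℝ) (t₀ t : ℝ) : 0 < picardWeight k t₀ t :=
  Real.cosh_pos _

lemma continuous_picardWeight (hk : Continuous k) : Continuous (picardWeight k t₀) :=
  Real.continuous_cosh.comp <| continuous_const.mul <|
    intervalIntegral.continuous_primitive hk.intervalIntegrable t₀

lemma abs_sinh_le_cosh (x : ℝ) : |Real.sinh x| ≤ Real.cosh x := by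
  rw [Real.abs_sinh, ← Real.cosh_abs x]
  exact (Real.sinh_lt_cosh |x|).le

lemma integral_mul_picardWeight (hk : Continuous k) (t : ℝ) :
    ∫ s in t₀..t, k s * picardWeight k t₀ s = Real.sinh (2 * ∫ s in t₀..t, k s) / 2 := by
  have hderiv (s : ℝ) : HasDerivAt (fun t ↦ Real.sinh (2 * ∫ s in t₀..t, k s) / 2)
      (k s * picardWeight k t₀ s) s := by
    have hprim := (hk.integral_hasStrictDerivAt t₀ s).hasDerivAt
    refine ((hprim.const_mul 2).sinh.div_const 2).congr_deriv ?_
    rw [picardWeight]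
    ring
  rw [intervalIntegral.integral_eq_sub_of_hasDerivAt (fun s _ ↦ hderiv s)
    ((hk.mul (continuous_picardWeight hk)).intervalIntegrable _ _)]
  simp

lemma norm_integral_le_picardWeight (hk : Continuous k) {f : ℝ → E} {C : ℝ} (hC : 0 ≤ C)
    (hf : ∀ s, ‖f s‖ ≤ C * (k s * picardWeight k t₀ s)) (t : ℝ) :
    ‖∫ s in t₀..t, f s‖ ≤ C / 2 * picardWeight k t₀ t := by
  calc ‖∫ s in t₀..t, f s‖
      ≤ |∫ s in t₀..t, C * (k s * picardWeight k t₀ s)| :=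
        intervalIntegral.norm_integral_le_abs_of_norm_le (.of_forall hf)
          ((continuous_const.mul (hk.mul (continuous_picardWeight hk))).intervalIntegrable _ _)
    _ = C / 2 * |Real.sinh (2 * ∫ s in t₀..t, k s)| := by
        rw [intervalIntegral.integral_const_mul, integral_mul_picardWeight hk, abs_mul, abs_div,
          abs_two, abs_of_nonneg hC]
        ring
    _ ≤ C / 2 * picardWeight k t₀ t := by
        gcongr
        exact abs_sinh_le_cosh _

end PicardWeight

section Picard

variable {v : ℝ → E → E} {k : ℝ → ℝ} {t₀ : ℝ} {x₀ : E} {α β : ℝ → E}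

lemma hasDerivAt_picard [CompleteSpace E] (hv : Continuous ↿v) (hα : Continuous α) (t : ℝ) :
    HasDerivAt (ODE.picard v t₀ x₀ α) (v t (α t)) t := by
  have hvα : Continuous fun s ↦ v s (α s) := hv.comp (continuous_id.prodMk hα)
  exact (hvα.integral_hasStrictDerivAt t₀ t).hasDerivAt.const_add x₀

lemma norm_picard_le (hk : Continuous k) (hgrowth : ∀ t x, ‖v t x‖ ≤ k t * (‖x‖ + 1))
    {C : ℝ} (hC : 0 ≤ C) (hα : ∀ t, ‖α t‖ ≤ C * picardWeight k t₀ t) (t : ℝ) :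
    ‖ODE.picard v t₀ x₀ α t‖ ≤ (‖x₀‖ + (C + 1) / 2) * picardWeight k t₀ t := by
  have hk₀ (t : ℝ) : 0 ≤ k t := by simpa using (norm_nonneg _).trans (hgrowth t 0)
  have hvα (s : ℝ) : ‖v s (α s)‖ ≤ (C + 1) * (k s * picardWeight k t₀ s) := by
    calc ‖v s (α s)‖ ≤ k s * (‖α s‖ + 1) := hgrowth s (α s)
      _ ≤ k s * (C * picardWeight k t₀ s + picardWeight k t₀ s) := by
          gcongr
          exacts [hk₀ s, hα s, one_le_picardWeight k t₀ s]
      _ = (C + 1) * (k s * picardWeight k t₀ s) := by ring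
  calc ‖ODE.picard v t₀ x₀ α t‖ ≤ ‖x₀‖ + ‖∫ s in t₀..t, v s (α s)‖ := norm_add_le _ _
    _ ≤ ‖x₀‖ * picardWeight k t₀ t + (C + 1) / 2 * picardWeight k t₀ t :=
        add_le_add (le_mul_of_one_le_right (norm_nonneg x₀) (one_le_picardWeight k t₀ t))
          (norm_integral_le_picardWeight hk (by positivity) hvα t)
    _ = (‖x₀‖ + (C + 1) / 2) * picardWeight k t₀ t := by ring

lemma norm_picard_sub_picard_le (hk : Continuous k) (hk₀ : ∀ t, 0 ≤ k t) (hv : Continuous ↿v)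
    (hlip : ∀ t x y, ‖v t x - v t y‖ ≤ k t * ‖x - y‖) (hα : Continuous α) (hβ : Continuous β)
    {C : ℝ} (hC : 0 ≤ C) (hαβ : ∀ t, ‖α t - β t‖ ≤ C * picardWeight k t₀ t) (t : ℝ) :
    ‖ODE.picard v t₀ x₀ α t - ODE.picard v t₀ x₀ β t‖ ≤ C / 2 * picardWeight k t₀ t := by
  have hvα : Continuous fun s ↦ v s (α s) := hv.comp (continuous_id.prodMk hα)
  have hvβ : Continuous fun s ↦ v s (β s) := hv.comp (continuous_id.prodMk hβ)
  rw [ODE.picard_apply, ODE.picard_apply, add_sub_add_left_eq_sub,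
    ← intervalIntegral.integral_sub (hvα.intervalIntegrable _ _) (hvβ.intervalIntegrable _ _)]
  refine norm_integral_le_picardWeight hk hC (fun s ↦ ?_) t
  calc ‖v s (α s) - v s (β s)‖ ≤ k s * ‖α s - β s‖ := hlip s _ _
    _ ≤ k s * (C * picardWeight k t₀ s) := mul_le_mul_of_nonneg_left (hαβ s) (hk₀ s)
    _ = C * (k s * picardWeight k t₀ s) := by ring

lemma exists_continuous_isFixedPt_picard [CompleteSpace E] (hk : Continuous k)
    (hv : Continuous ↿v) (hlip : ∀ t x y, ‖v t x - v t y‖ ≤ k t * ‖x - y‖)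
    (hgrowth : ∀ t x, ‖v t x‖ ≤ k t * (‖x‖ + 1)) (t₀ : ℝ) (x₀ : E) :
    ∃ α : ℝ → E, Continuous α ∧ IsFixedPt (ODE.picard v t₀ x₀) α := by
  have hk₀ (t : ℝ) : 0 ≤ k t := by simpa using (norm_nonneg _).trans (hgrowth t 0)
  refine exists_continuous_isFixedPt_of_weighted_contraction (c := 1 / 2)
    (continuous_picardWeight hk) (picardWeight_pos k t₀) (NNReal.half_lt_self one_ne_zero)
    (fun α hα ↦ ?_) (fun α C _ hC hαC ↦ ⟨_, norm_picard_le hk hgrowth hC hαC⟩)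
    (fun α β C hα hβ hC hαβ t ↦ ?_)
  · exact continuous_iff_continuousAt.2 fun t ↦ (hasDerivAt_picard hv hα t).continuousAt
  · refine (norm_picard_sub_picard_le hk hk₀ hv hlip hα hβ hC hαβ t).trans_eq ?_
    push_cast
    ring

end Picard

section GloballyLipschitz

variable {v : ℝ → E → E} {K : ℝ → ℝ≥0}

theorem exists_isIntegralCurve_of_lipschitzWith [CompleteSpace E] (hv : Continuous ↿v)
    (hK : Continuous K) (hlip : ∀ t, LipschitzWith (K t) (v t)) (t₀ : ℝ) (x₀ : E) :
    ∃ α : ℝ → E, α t₀ = x₀ ∧ IsIntegralCurve α v := by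
  let k (t : ℝ) : ℝ := K t + ‖v t 0‖
  have hk : Continuous k :=
    (NNReal.continuous_coe.comp hK).add (hv.comp (continuous_id.prodMk continuous_const)).norm
  have hvk (t : ℝ) (x y : E) : ‖v t x - v t y‖ ≤ k t * ‖x - y‖ :=
    ((hlip t).norm_sub_le x y).trans <|
      mul_le_mul_of_nonneg_right (le_add_of_nonneg_right (norm_nonneg _)) (norm_nonneg _)
  have hgrowth (t : ℝ) (x : E) : ‖v t x‖ ≤ k t * (‖x‖ + 1) := by
    calc ‖v t x‖ ≤ ‖v t x - v t 0‖ + ‖v t 0‖ := norm_le_norm_sub_add _ _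
      _ ≤ k t * ‖x‖ + k t :=
          add_le_add (by simpa using hvk t x 0) (le_add_of_nonneg_left (K t).coe_nonneg)
      _ = k t * (‖x‖ + 1) := by ring
  obtain ⟨α, hα, hfixed⟩ := exists_continuous_isFixedPt_picard hk hv hvk hgrowth t₀ x₀
  refine ⟨α, ?_, fun t ↦ ?_⟩
  · rw [← hfixed.eq, ODE.picard_apply₀]
  · exact (hasDerivAt_picard hv hα t).congr_of_eventuallyEq (.of_eq hfixed.eq.symm)

theorem eq_of_isIntegralCurve_of_lipschitzWith (hK : Continuous K)
    (hlip : ∀ t, LipschitzWith (K t) (v t)) {α β : ℝ → E} (hα : IsIntegralCurve α v)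
    (hβ : IsIntegralCurve β v) {t₀ : ℝ} (h₀ : α t₀ = β t₀) : α = β := by
  funext t
  obtain ⟨a, b, ht, ht₀⟩ : ∃ a b, t ∈ Ioo a b ∧ t₀ ∈ Ioo a b :=
    ⟨min t t₀ - 1, max t t₀ + 1, by grind, by grind⟩
  obtain ⟨C, hC⟩ := (isCompact_Icc (a := a) (b := b)).bddAbove_image hK.continuousOn
  have hlipC : ∀ s ∈ Ioo a b, LipschitzOnWith C (v s) univ := fun s hs ↦
    ((hlip s).weaken (hC (mem_image_of_mem K (Ioo_subset_Icc_self hs)))).lipschitzOnWith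
  exact ODE_solution_unique_of_mem_Ioo hlipC ht₀ (fun s _ ↦ ⟨hα s, trivial⟩)
    (fun s _ ↦ ⟨hβ s, trivial⟩) h₀ ht

theorem existsUnique_isIntegralCurve_of_lipschitzWith [CompleteSpace E] (hv : Continuous ↿v)
    (hK : Continuous K) (hlip : ∀ t, LipschitzWith (K t) (v t)) (t₀ : ℝ) (x₀ : E) :
    ∃! α : ℝ → E, α t₀ = x₀ ∧ IsIntegralCurve α v := by
  obtain ⟨α, hα₀, hα⟩ := exists_isIntegralCurve_of_lipschitzWith hv hK hlip t₀ x₀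
  exact ⟨α, ⟨hα₀, hα⟩, fun β ⟨hβ₀, hβ⟩ ↦
    eq_of_isIntegralCurve_of_lipschitzWith hK hlip hβ hα (hβ₀.trans hα₀.symm)⟩

theorem existsUnique_isIntegralCurve_clm [CompleteSpace E] {A : ℝ → E →L[ℝ] E}
    (hA : Continuous A) (t₀ : ℝ) (x₀ : E) :
    ∃! α : ℝ → E, α t₀ = x₀ ∧ IsIntegralCurve α fun t x ↦ A t x :=
  existsUnique_isIntegralCurve_of_lipschitzWith
    ((hA.comp continuous_fst).clm_apply continuous_snd) hA.nnnorm (fun t ↦ (A t).lipschitz) t₀ x₀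

end GloballyLipschitz

theorem stmt_12_general [CompleteSpace F] {σ : ℝ → E} (hσ : ContDiff ℝ 1 σ)
    {Γ : E → E →L[ℝ] F →L[ℝ] F} (hΓ : Continuous Γ) (t₀ : ℝ) (u₀ : F) :
    ∃! V : ℝ → F, V t₀ = u₀ ∧ ∀ t, HasDerivAt V (-(Γ (σ t) (deriv σ t) (V t))) t := by
  have hA : Continuous fun t ↦ -(Γ (σ t) (deriv σ t)) :=
    ((hΓ.comp hσ.continuous).clm_apply (hσ.continuous_deriv le_rfl)).neg
  exact existsUnique_isIntegralCurve_clm hA t₀ u₀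

/-- Coordinate form of the parallel-transport claim: along a `C¹` curve `σ`, for
each initial value `u₀` there is a unique parallel vector field `V` along `σ`,
i.e., a unique solution of `V'(t) = −Γ(σ(t))(σ'(t))(V(t))`, `V(0) = u₀`. -/
theorem stmt_12 {m n : ℕ}
    (σ : ℝ → (Fin m → ℝ)) (hσ : ContDiff ℝ 1 σ)
    (Γ : (Fin m → ℝ) → ((Fin m → ℝ) →L[ℝ] ((Fin n → ℝ) →L[ℝ] (Fin n → ℝ))))
    (hΓ : Continuous Γ) (u₀ : Fin n → ℝ) :
    ∃! V : ℝ → (Fin n → ℝ), V 0 = u₀ ∧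
      ∀ t : ℝ, HasDerivAt V (-(Γ (σ t) (deriv σ t) (V t))) t :=
  stmt_12_general hσ hΓ 0 u₀
end
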